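/- arXiv:2601.11010 — 2 statements merged into one kernel-verified Lean document; each statement's English description precedes it below -/
import Mathlib

section
/- Necessity of the feasibility pre-screening conditions: suppose the travel times satisfy the triangle inequality and the service durations are nonnegative, and suppose a feasible route n_0 = s, n_1, …, n_G = d with service start times a_0 = t_0, …, a_G serves a node i, i.e., i = n_g for some 1 ≤ g ≤ G − 1. Then, writing ā = max{t_0 + t(s, i), r(i), b(i)}, both pre-screening conditions hold: ā ≤ e(i) and ā + τ(i) + t(i, d) ≤ Tend. In particular, a worker that cannot satisfy these two inequalities for task i cannot serve i on any feasible route. -/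
/-!
By the triangle inequality, skipping the intermediate stops of a route, and their nonnegative
service durations, can only save time. Hence `a g` is at least the earliest possible start `ā` at
the `g`-th stop, and the worker, who goes on to reach `d` by the deadline, would also do so by
starting service there at `ā` and then travelling straight to `d`.
-/

/-- The timing constraint on a route `n 0, …, n G` with service start times `a 0, …, a G`, service
durations `τ` and travel times `t`: a stop starts only after the previous one has been served and
the travel leg completed. Waiting is allowed, and values beyond index `G` are unconstrained. -/
def IsServiceSchedule {V T : Type*} [Add T] [LE T]
    (τ : V → T) (t : V × V → T) (n : ℕ → V) (a : ℕ → T) (G : ℕ) : Prop :=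
  ∀ g < G, a g + τ (n g) + t (n g, n (g + 1)) ≤ a (g + 1)

/-- The quantity `ā` of the pre-screening conditions: the earliest start of service at `i` for a
worker who leaves `s` at time `t0` and travels directly to `i`. -/
def earliestStart {V T : Type*} [Add T] [SemilatticeSup T]
    (t : V × V → T) (r b : V → T) (s : V) (t0 : T) (i : V) : T :=
  (t0 + t (s, i)) ⊔ r i ⊔ b i

namespace IsServiceSchedule

variable {V T : Type*} [AddCommMonoid T]
  {τ : V → T} {t : V × V → T} {n : ℕ → V} {a : ℕ → T} {G h k : ℕ}

section Preorder

variable [Preorder T] [IsOrderedAddMonoid T]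

theorem start_add_service_add_travel_le (hsched : IsServiceSchedule τ t n a G)
    (hτ : ∀ x, 0 ≤ τ x) (htri : ∀ x y z, t (x, z) ≤ t (x, y) + t (y, z))
    (hhk : h < k) (hkG : k ≤ G) :
    a h + τ (n h) + t (n h, n k) ≤ a k := by
  induction k, hhk using Nat.le_induction with
  | base => exact hsched h hkG
  | succ k _ ih =>
    calc a h + τ (n h) + t (n h, n (k + 1))
      _ ≤ a h + τ (n h) + (t (n h, n k) + t (n k, n (k + 1))) := by gcongr; exact htri _ _ _
      _ = a h + τ (n h) + t (n h, n k) + t (n k, n (k + 1)) := (add_assoc _ _ _).symm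
      _ ≤ a k + t (n k, n (k + 1)) := by gcongr; exact ih (Nat.le_of_succ_le hkG)
      _ ≤ a k + τ (n k) + t (n k, n (k + 1)) := by gcongr; exact le_add_of_nonneg_right (hτ _)
      _ ≤ a (k + 1) := hsched k hkG

theorem start_add_travel_le (hsched : IsServiceSchedule τ t n a G)
    (hτ : ∀ x, 0 ≤ τ x) (htri : ∀ x y z, t (x, z) ≤ t (x, y) + t (y, z))
    (hhk : h < k) (hkG : k ≤ G) :
    a h + t (n h, n k) ≤ a k :=
  calc a h + t (n h, n k)
    _ ≤ a h + τ (n h) + t (n h, n k) := by gcongr; exact le_add_of_nonneg_right (hτ _)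
    _ ≤ a k := hsched.start_add_service_add_travel_le hτ htri hhk hkG

end Preorder

theorem earliestStart_le [SemilatticeSup T] [IsOrderedAddMonoid T] {r b : V → T}
    (hsched : IsServiceSchedule τ t n a G)
    (hτ : ∀ x, 0 ≤ τ x) (htri : ∀ x y z, t (x, z) ≤ t (x, y) + t (y, z))
    (hk : 0 < k) (hkG : k ≤ G) (hopen : b (n k) ⊔ r (n k) ≤ a k) :
    earliestStart t r b (n 0) (a 0) (n k) ≤ a k :=
  have ⟨hb, hr⟩ := sup_le_iff.mp hopen
  sup_le (sup_le (hsched.start_add_travel_le hτ htri hk hkG) hr) hb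

end IsServiceSchedule

theorem prescreening_necessary_general {V T : Type*}
    [AddCommMonoid T] [SemilatticeSup T] [IsOrderedAddMonoid T]
    {τ : V → T} {t : V × V → T} {r b e : V → T} {n : ℕ → V} {a : ℕ → T} {G g : ℕ} {Tend : T}
    (hτ : ∀ x, 0 ≤ τ x) (htri : ∀ x y z, t (x, z) ≤ t (x, y) + t (y, z))
    (hsched : IsServiceSchedule τ t n a G) (hg : 0 < g) (hgG : g < G)
    (hopen : b (n g) ⊔ r (n g) ≤ a g) (hclose : a g ≤ e (n g)) (hdl : a G ≤ Tend) :
    earliestStart t r b (n 0) (a 0) (n g) ≤ e (n g) ∧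
    earliestStart t r b (n 0) (a 0) (n g) + τ (n g) + t (n g, n G) ≤ Tend := by
  have hstart : earliestStart t r b (n 0) (a 0) (n g) ≤ a g :=
    hsched.earliestStart_le hτ htri hg hgG.le hopen
  refine ⟨hstart.trans hclose, ?_⟩
  calc earliestStart t r b (n 0) (a 0) (n g) + τ (n g) + t (n g, n G)
    _ ≤ a g + τ (n g) + t (n g, n G) := by gcongr
    _ ≤ a G := hsched.start_add_service_add_travel_le hτ htri hgG le_rfl
    _ ≤ Tend := hdl

/-- Necessity of the feasibility pre-screening conditions: if a feasible route
of a worker serves node `i`, then with `ā = max {t0 + t (s,i), r i, b i}` both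
pre-screening conditions `ā ≤ e i` and `ā + τ i + t (i,d) ≤ Tend` hold. -/
theorem prescreening_necessary {V : Type*}
    (τ : V → ℝ) (t : V × V → ℝ) (r b e : V → ℝ)
    (s d : V) (t0 Tend : ℝ)
    (hτ : ∀ i, 0 ≤ τ i) (ht : ∀ p, 0 ≤ t p)
    (htri : ∀ x y z : V, t (x, z) ≤ t (x, y) + t (y, z))
    (G : ℕ) (hG : 1 ≤ G) (n : ℕ → V) (a : ℕ → ℝ)
    (hn0 : n 0 = s) (hnG : n G = d) (ha0 : a 0 = t0)
    (hrec : ∀ g, 1 ≤ g → g ≤ G →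
      a (g - 1) + τ (n (g - 1)) + t (n (g - 1), n g) ≤ a g)
    (hfeas : ∀ g, 1 ≤ g → g ≤ G - 1 →
      max (b (n g)) (r (n g)) ≤ a g ∧ a g ≤ e (n g))
    (hdl : a G ≤ Tend)
    (i : V) (g : ℕ) (hg1 : 1 ≤ g) (hg2 : g ≤ G - 1) (hserve : n g = i) :
    max (max (t0 + t (s, i)) (r i)) (b i) ≤ e i ∧
    max (max (t0 + t (s, i)) (r i)) (b i) + τ i + t (i, d) ≤ Tend := by
  subst hn0 hnG ha0 hserve
  exact prescreening_necessary_general hτ htri (fun k hk => hrec (k + 1) k.succ_pos hk)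
    hg1 (by omega) (hfeas g hg1 hg2).1 (hfeas g hg1 hg2).2 hdl
end

section
/- Safety of the pre-screening filter: let i be a task and let each idle worker w have current location s_w, destination d_w, departure time t_0 and deadline Tend(w), and suppose the travel times satisfy the triangle inequality and the service durations are nonnegative. If for every idle worker w at least one of the two conditions max{t_0 + t(s_w, i), r(i), b(i)} ≤ e(i) and max{t_0 + t(s_w, i), r(i), b(i)} + τ(i) + t(i, d_w) ≤ Tend(w) fails (i.e., the feasible-worker set F_i is empty), then task i is not served on any feasible route of any idle worker; hence omitting i from the snapshot does not remove any feasible service of i. -/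
/-!
Along a route, the triangle inequality and the nonnegativity of service durations let one delete the
intermediate stops: the time of a stop plus its service plus the direct travel to any later stop is
at most the time of that later stop. If a feasible route serves `i` at time `a`, then comparing `i`
with the departure bounds the earliest start at `i` by `a`, hence by the closing time of `i`, and
comparing `i` with the destination shows that starting at `i` no later than `a` meets the deadline.
-/

/-- The timing data of a routing problem on nodes `V` with times in `R`: service durations `τ`,
travel times `t`, release times `r` and time windows `[b, e]`. -/
structure RoutingData (V R : Type*) where
  service : V → R
  travel : V → V → R
  release : V → R
  opening : V → R
  closing : V → R

/-- A worker: its location `s`, destination `d`, departure time `t₀` and deadline `Tend`. -/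
structure Worker (V R : Type*) where
  source : V
  target : V
  departure : R
  deadline : R

/-- A route of the worker `w`, with stops `node g` started at `time g` for `0 ≤ g ≤ length`. Both
sequences are total functions, whose values beyond `length` are irrelevant. -/
structure Route {V R : Type*} [Add R] [LE R] (D : RoutingData V R) (w : Worker V R) where
  length : ℕ
  node : ℕ → V
  time : ℕ → R
  length_pos : 0 < length
  node_zero : node 0 = w.source
  node_length : node length = w.target
  time_zero : time 0 = w.departure
  step : ∀ g < length, time g + D.service (node g) + D.travel (node g) (node (g + 1)) ≤ time (g + 1)

namespace RoutingData

variable {V R : Type*}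

/-- The earliest time at which `w`, travelling directly, could start to serve `i`. -/
def earliestStart [Add R] [Max R] (D : RoutingData V R) (w : Worker V R) (i : V) : R :=
  max (max (w.departure + D.travel w.source i) (D.release i)) (D.opening i)

/-- The two pre-screening inequalities, i.e. membership of `w` in the feasible-worker set `F_i`
(idleness aside). -/
def PassesPrescreen [Add R] [Max R] [LE R] (D : RoutingData V R) (w : Worker V R) (i : V) : Prop :=
  D.earliestStart w i ≤ D.closing i ∧
    D.earliestStart w i + D.service i + D.travel i w.target ≤ w.deadline

end RoutingData

namespace Route

variable {V R : Type*}

/-- Feasibility of a route: intermediate stops respect release times and time windows, and the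
worker meets its deadline. -/
structure IsFeasible [Add R] [LE R] [Max R] {D : RoutingData V R} {w : Worker V R}
    (ρ : Route D w) : Prop where
  window : ∀ g, 0 < g → g < ρ.length →
    max (D.opening (ρ.node g)) (D.release (ρ.node g)) ≤ ρ.time g ∧
      ρ.time g ≤ D.closing (ρ.node g)
  deadline : ρ.time ρ.length ≤ w.deadline

/-- A route serves the tasks at its intermediate stops; its two endpoints do not count. -/
def Serves [Add R] [LE R] {D : RoutingData V R} {w : Worker V R} (ρ : Route D w) (i : V) : Prop :=
  ∃ g, 0 < g ∧ g < ρ.length ∧ ρ.node g = i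

section Shortcut

variable [AddCommMonoid R] [Preorder R] [IsOrderedAddMonoid R]
  {D : RoutingData V R} {w : Worker V R}

theorem time_add_service_add_travel_le (ρ : Route D w) (hservice : ∀ x, 0 ≤ D.service x)
    (htri : ∀ x y z, D.travel x z ≤ D.travel x y + D.travel y z)
    {j k : ℕ} (hjk : j < k) (hk : k ≤ ρ.length) :
    ρ.time j + D.service (ρ.node j) + D.travel (ρ.node j) (ρ.node k) ≤ ρ.time k := by
  induction k, hjk using Nat.le_induction with
  | base => exact ρ.step j hk
  | succ k _ ih =>
    let x := ρ.node j
    let y := ρ.node k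
    let z := ρ.node (k + 1)
    calc ρ.time j + D.service x + D.travel x z
        ≤ ρ.time j + D.service x + (D.travel x y + D.travel y z) := by gcongr; exact htri x y z
      _ = ρ.time j + D.service x + D.travel x y + D.travel y z := (add_assoc _ _ _).symm
      _ ≤ ρ.time k + D.travel y z := by gcongr; exact ih (Nat.le_of_succ_le hk)
      _ ≤ ρ.time k + D.service y + D.travel y z := by
        gcongr; exact le_add_of_nonneg_right (hservice y)
      _ ≤ ρ.time (k + 1) := ρ.step k hk

theorem departure_add_travel_le (ρ : Route D w) (hservice : ∀ x, 0 ≤ D.service x)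
    (htri : ∀ x y z, D.travel x z ≤ D.travel x y + D.travel y z)
    {g : ℕ} (hg : 0 < g) (hgG : g ≤ ρ.length) :
    w.departure + D.travel w.source (ρ.node g) ≤ ρ.time g :=
  calc w.departure + D.travel w.source (ρ.node g)
      ≤ w.departure + D.service w.source + D.travel w.source (ρ.node g) := by
        gcongr; exact le_add_of_nonneg_right (hservice _)
    _ ≤ ρ.time g := by
        simpa only [ρ.node_zero, ρ.time_zero] using
          ρ.time_add_service_add_travel_le hservice htri hg hgG

end Shortcut

theorem IsFeasible.earliestStart_le_time
    [AddCommMonoid R] [LinearOrder R] [IsOrderedAddMonoid R]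
    {D : RoutingData V R} {w : Worker V R} {ρ : Route D w} (hρ : ρ.IsFeasible)
    (hservice : ∀ x, 0 ≤ D.service x)
    (htri : ∀ x y z, D.travel x z ≤ D.travel x y + D.travel y z)
    {g : ℕ} (hg : 0 < g) (hgG : g < ρ.length) :
    D.earliestStart w (ρ.node g) ≤ ρ.time g := by
  obtain ⟨hopening, hrelease⟩ := max_le_iff.mp (hρ.window g hg hgG).1
  exact max_le (max_le (ρ.departure_add_travel_le hservice htri hg hgG.le) hrelease) hopening

end Route

theorem prescreen_filter_safe_general {V R : Type*}
    [AddCommMonoid R] [LinearOrder R] [IsOrderedAddMonoid R]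
    {D : RoutingData V R} {w : Worker V R} {i : V}
    (hservice : ∀ x, 0 ≤ D.service x)
    (htri : ∀ x y z, D.travel x z ≤ D.travel x y + D.travel y z)
    (hfail : ¬ D.PassesPrescreen w i) :
    ¬ ∃ ρ : Route D w, ρ.IsFeasible ∧ ρ.Serves i := by
  rintro ⟨ρ, hρ, g, hg, hgG, rfl⟩
  have hstart : D.earliestStart w (ρ.node g) ≤ ρ.time g :=
    hρ.earliestStart_le_time hservice htri hg hgG
  have harrival : ρ.time g + D.service (ρ.node g) + D.travel (ρ.node g) w.target ≤
      ρ.time ρ.length := by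
    simpa only [ρ.node_length] using ρ.time_add_service_add_travel_le hservice htri hgG le_rfl
  refine hfail ⟨hstart.trans (hρ.window g hg hgG).2, ?_⟩
  calc D.earliestStart w (ρ.node g) + D.service (ρ.node g) + D.travel (ρ.node g) w.target
      ≤ ρ.time g + D.service (ρ.node g) + D.travel (ρ.node g) w.target := by gcongr
    _ ≤ ρ.time ρ.length := harrival
    _ ≤ w.deadline := hρ.deadline

/-- Safety of the pre-screening filter: if for every idle worker at least one
of the two pre-screening conditions for task `i` fails (the feasible-worker
set `F_i` is empty), then no feasible route of any idle worker serves `i`. -/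
theorem prescreen_filter_safe {V Wk : Type*}
    (τ : V → ℝ) (t : V × V → ℝ) (r b e : V → ℝ)
    (sw dw : Wk → V) (t0 : ℝ) (Tend : Wk → ℝ)
    (hτ : ∀ i, 0 ≤ τ i) (ht : ∀ p, 0 ≤ t p)
    (htri : ∀ x y z : V, t (x, z) ≤ t (x, y) + t (y, z))
    (i : V)
    (hfail : ∀ w : Wk,
      ¬ (max (max (t0 + t (sw w, i)) (r i)) (b i) ≤ e i ∧
         max (max (t0 + t (sw w, i)) (r i)) (b i) + τ i + t (i, dw w) ≤ Tend w)) :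
    ∀ w : Wk, ¬ ∃ (G : ℕ) (n : ℕ → V) (a : ℕ → ℝ),
      1 ≤ G ∧ n 0 = sw w ∧ n G = dw w ∧ a 0 = t0 ∧
      (∀ g, 1 ≤ g → g ≤ G →
        a (g - 1) + τ (n (g - 1)) + t (n (g - 1), n g) ≤ a g) ∧
      (∀ g, 1 ≤ g → g ≤ G - 1 →
        max (b (n g)) (r (n g)) ≤ a g ∧ a g ≤ e (n g)) ∧
      a G ≤ Tend w ∧
      (∃ g, 1 ≤ g ∧ g ≤ G - 1 ∧ n g = i) := by
  rintro w ⟨G, n, a, hG, hsource, htarget, hdeparture, hstep, hwindow, hdeadline, g, hg, hgG, hgi⟩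
  let D : RoutingData V ℝ := ⟨τ, fun x y ↦ t (x, y), r, b, e⟩
  let worker : Worker V ℝ := ⟨sw w, dw w, t0, Tend w⟩
  let ρ : Route D worker :=
    ⟨G, n, a, hG, hsource, htarget, hdeparture, fun g hg ↦ hstep (g + 1) g.succ_pos hg⟩
  have hρ : ρ.IsFeasible := ⟨fun g hg hgG ↦ hwindow g hg (Nat.le_sub_one_of_lt hgG), hdeadline⟩
  have hserves : ρ.Serves i := ⟨g, hg, Nat.lt_of_le_sub_one hG hgG, hgi⟩
  have hprescreen : ¬ D.PassesPrescreen worker i := hfail w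
  exact prescreen_filter_safe_general hτ htri hprescreen ⟨ρ, hρ, hserves⟩
end
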